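/- Let d ≥ 2 and j_1 ≥ ⋯ ≥ j_d ≥ 1 with N = j_1 + ⋯ + j_d. Then limsup_{n→∞} (log₂ rk(D(j_1,…,j_d)^{⊗n})) / n ≤ Σ_{k=2}^d log₂(j_k + 1), where rk denotes tensor rank. (Equivalently, the SLOCC entanglement transformation rate R(GHZ_N, D(j_1,…,j_d)) is at least (Σ_{k=2}^d log₂(j_k+1))^{−1}, since a state is reachable from GHZ_N^{⊗m} by SLOCC if and only if its tensor rank is at most 2^m.) -/

import Mathlib

/-- The unnormalized Dicke tensor D(j_1,…,j_d). -/
noncomputable def Dicke (d : ℕ) (j : Fin d → ℕ) (N : ℕ) (s : Fin N → Fin d) : ℂ :=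
  if ∀ i, (Finset.univ.filter fun p => s p = i).card = j i then 1 else 0

/-- The n-th tensor power D(j_1,…,j_d)^{⊗n}. -/
noncomputable def DickePow (d : ℕ) (j : Fin d → ℕ) (N n : ℕ)
    (α : Fin N → Fin n → Fin d) : ℂ :=
  ∏ t, Dicke d j N (fun p => α p t)

/-- The tensor rank of D(j_1,…,j_d)^{⊗n}: the least r admitting a rank-r decomposition. -/
noncomputable def rkDickePow (d : ℕ) (j : Fin d → ℕ) (N n : ℕ) : ℕ :=
  sInf {r : ℕ | ∃ u : Fin r → Fin N → (Fin n → Fin d) → ℂ,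
    ∀ α : Fin N → Fin n → Fin d, DickePow d j N n α = ∑ t, ∏ p, u t p (α p)}

/-!
The `N`-party tensor `x ↦ f (∑ p, g p (x p))`, where the `g p` take values in a finite abelian group
`G`, has rank at most `|G|`: expand `f` in characters of `G`, each of which turns the sum into a
product. We realize `D(j)^{⊗n}` as such a tensor. Fix a symbol `z`. For each position `t` and each
symbol `k ≠ z`, read the number `c t k` of parties holding `k` at position `t` modulo `j k + 1`, and
read the total `∑ t, c t z` modulo `n * j z + 1`. A number congruent to `b` modulo `b + 1` is at
least `b`, so the prescribed residues force `c t k ≥ j k` for `k ≠ z` and `∑ t, c t z ≥ n * j z`.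
At each position the counts add up to `N`, hence `c t z ≤ j z`, and all these inequalities are
equalities. So the rank is at most `(∏ k ≠ z, (j k + 1)) ^ n * (n * j z + 1)`, whose last factor is
subexponential.
-/

open Filter Finset Topology

section RankDecomposition

variable {ι : Type*} [Fintype ι] {X : ι → Type*}

/-- `T` is a sum of `r` product tensors, which bounds its tensor rank by `r`. The parties are
indexed by `ι`, and party `p` has index set `X p`. -/
def HasRankDecomposition {K : Type*} [CommSemiring K] (T : (∀ p, X p) → K) (r : ℕ) : Prop :=
  ∃ u : Fin r → ∀ p, X p → K, ∀ x, T x = ∑ t, ∏ p, u t p (x p)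

lemma hasRankDecomposition_card_of_eq_sum_mul_prod {K τ : Type*} [CommSemiring K] [Fintype τ]
    [Nonempty ι] {T : (∀ p, X p) → K} (a : τ → K) (v : τ → ∀ p, X p → K)
    (hT : ∀ x, T x = ∑ t, a t * ∏ p, v t p (x p)) :
    HasRankDecomposition T (Fintype.card τ) := by
  classical
  obtain ⟨q⟩ := ‹Nonempty ι›
  let e := (Fintype.equivFin τ).symm
  refine ⟨fun t p y => (if p = q then a (e t) else 1) * v (e t) p y, fun x => ?_⟩
  simp only [prod_mul_distrib, prod_ite_eq', mem_univ, if_true, hT]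
  exact (e.sum_comp fun t => a t * ∏ p, v t p (x p)).symm

lemma addChar_sum_eq_prod {A M : Type*} [AddCommMonoid A] [CommMonoid M] (χ : AddChar A M)
    (a : ι → A) : χ (∑ p, a p) = ∏ p, χ (a p) :=
  map_prod χ.toMonoidHom (fun p => Multiplicative.ofAdd (a p)) univ

lemma hasRankDecomposition_apply_sum {G : Type*} [AddCommGroup G] [Fintype G] [Nonempty ι]
    (f : G → ℂ) (g : ∀ p, X p → G) :
    HasRankDecomposition (fun x : ∀ p, X p => f (∑ p, g p (x p))) (Fintype.card G) := by
  rw [← AddChar.card_eq]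
  let B := AddChar.complexBasis G
  refine hasRankDecomposition_card_of_eq_sum_mul_prod (B.repr f) (fun χ p y => χ (g p y))
    fun x => ?_
  calc f (∑ p, g p (x p)) = (∑ χ, B.repr f χ • B χ) (∑ p, g p (x p)) := by rw [B.sum_repr]
    _ = ∑ χ, B.repr f χ * ∏ p, χ (g p (x p)) := by
      simp [B, addChar_sum_eq_prod]

end RankDecomposition

section SymbolCount

variable {ι τ κ : Type*} [Fintype ι] [DecidableEq κ]

/-- The entry at `(t, k)` is the number of parties `p` whose word `α p` has the symbol `k` at
position `t`. -/
def symbolCount (α : ι → τ → κ) (t : τ) (k : κ) : ℕ :=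
  #{p | α p t = k}

lemma symbolCount_eq_sum_single (α : ι → τ → κ) :
    symbolCount α = ∑ p, fun t => Pi.single (α p t) 1 := by
  ext t k
  simp [symbolCount, Pi.single_apply, eq_comm]

lemma sum_symbolCount [Fintype κ] (α : ι → τ → κ) (t : τ) :
    ∑ k, symbolCount α t k = Fintype.card ι :=
  (card_eq_sum_card_fiberwise fun p _ => mem_univ (α p t)).symm

end SymbolCount

section CountResidues

variable {τ κ : Type*} [Fintype κ]

lemma le_of_natCast_zmod_succ_eq {a b : ℕ} (h : (a : ZMod (b + 1)) = b) : b ≤ a :=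
  calc b = b % (b + 1) := (Nat.mod_eq_of_lt b.lt_succ_self).symm
    _ = a % (b + 1) := ((ZMod.natCast_eq_natCast_iff' a b (b + 1)).1 h).symm
    _ ≤ a := Nat.mod_le a (b + 1)

lemma eq_of_sum_eq_of_le {M : Type*} [AddCommMonoid M] [PartialOrder M]
    [IsOrderedCancelAddMonoid M] {f g : κ → M} (hsum : ∑ k, f k = ∑ k, g k) (hle : g ≤ f) : f = g :=
  funext fun k => ((sum_eq_sum_iff_of_le fun i _ => hle i).1 hsum.symm k (mem_univ k)).symm

section OrderedSums

variable {M : Type*} [AddCommMonoid M] [LinearOrder M] [IsOrderedCancelAddMonoid M]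

lemma apply_le_of_sum_eq_of_le_off {f g : κ → M} {z : κ} (hsum : ∑ k, f k = ∑ k, g k)
    (hle : ∀ k ≠ z, g k ≤ f k) : f z ≤ g z := by
  by_contra! hlt
  have hle' : ∀ k, g k ≤ f k := fun k => by
    obtain rfl | hk := eq_or_ne k z
    exacts [hlt.le, hle k hk]
  exact (sum_lt_sum (fun k _ => hle' k) ⟨z, mem_univ z, hlt⟩).ne' hsum

lemma rows_eq_of_sum_eq_of_le_off [Fintype τ] {c : τ → κ → M} {j : κ → M} {z : κ}
    (hrow : ∀ t, ∑ k, c t k = ∑ k, j k) (hoff : ∀ t, ∀ k ≠ z, j k ≤ c t k)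
    (hcol : ∑ _t : τ, j z ≤ ∑ t, c t z) (t : τ) : c t = j := by
  have hz_le : ∀ t, c t z ≤ j z := fun t => apply_le_of_sum_eq_of_le_off (hrow t) (hoff t)
  have hz : (fun _ => j z) = fun t => c t z :=
    eq_of_sum_eq_of_le (hcol.antisymm (sum_le_sum fun t _ => hz_le t)) hz_le
  refine eq_of_sum_eq_of_le (hrow t) fun k => ?_
  obtain rfl | hk := eq_or_ne k z
  exacts [(congrFun hz t).le, hoff t k hk]

end OrderedSums

/-- The group of residues of a count matrix `τ → κ → ℕ` retained by `countResidue`: one for each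
row and each symbol other than `z`, and a single one for the whole column `z`. -/
abbrev CountResidues (τ : Type*) [Fintype τ] (j : κ → ℕ) (z : κ) : Type _ :=
  (τ → ∀ k : {k // k ≠ z}, ZMod (j k + 1)) × ZMod (Fintype.card τ * j z + 1)

variable [Fintype τ]

lemma card_countResidues [DecidableEq τ] [DecidableEq κ] (j : κ → ℕ) (z : κ) :
    Fintype.card (CountResidues τ j z) =
      (∏ k ∈ univ.erase z, (j k + 1)) ^ Fintype.card τ * (Fintype.card τ * j z + 1) := by
  rw [prod_subtype (univ.erase z) (p := (· ≠ z)) (F := inferInstance) (by simp)]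
  simp [ZMod.card]

/-- The residues of a count matrix `c`: each entry `c t k` with `k ≠ z` modulo `j k + 1`, and the
sum of column `z` modulo `|τ| * j z + 1`. Among the matrices whose rows have the same
sum as `j`, they single out the one with all rows equal to `j`. -/
def countResidue (j : κ → ℕ) (z : κ) : (τ → κ → ℕ) →+ CountResidues τ j z where
  toFun c := (fun t k => (c t k : ZMod (j k + 1)), ((∑ t, c t z : ℕ) : ZMod _))
  map_zero' := by ext <;> simp
  map_add' c c' := by ext <;> simp [sum_add_distrib]

lemma countResidue_eq_iff {c : τ → κ → ℕ} {j : κ → ℕ} (z : κ)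
    (hrow : ∀ t, ∑ k, c t k = ∑ k, j k) :
    countResidue j z c = countResidue j z (fun _ => j) ↔ ∀ t, c t = j := by
  refine ⟨fun h => rows_eq_of_sum_eq_of_le_off (z := z) hrow (fun t k hk => ?_) ?_,
    fun h => by rw [funext h]⟩
  · exact le_of_natCast_zmod_succ_eq (congrFun (congrFun (congrArg Prod.fst h) t) ⟨k, hk⟩)
  · have hcol := congrArg Prod.snd h
    simp only [countResidue, AddMonoidHom.coe_mk, ZeroHom.coe_mk, sum_const, card_univ,
      smul_eq_mul] at hcol
    simpa using le_of_natCast_zmod_succ_eq hcol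

end CountResidues

section Dicke

variable {d : ℕ} {j : Fin d → ℕ} {N n : ℕ}

lemma DickePow_eq_ite (α : Fin N → Fin n → Fin d) :
    DickePow d j N n α = if ∀ t, symbolCount α t = j then 1 else 0 := by
  simp only [DickePow, Dicke, Fintype.prod_boole, funext_iff, symbolCount]
  congr

lemma DickePow_eq_ite_countResidue (z : Fin d) (hN : N = ∑ i, j i) (α : Fin N → Fin n → Fin d) :
    DickePow d j N n α =
      if ∑ p, countResidue j z (fun t => Pi.single (α p t) 1) = countResidue j z (fun _ => j)
      then 1 else 0 := by
  have hrow (t : Fin n) : ∑ k, symbolCount α t k = ∑ k, j k := by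
    rw [sum_symbolCount, Fintype.card_fin, hN]
  simp only [DickePow_eq_ite, ← map_sum, ← symbolCount_eq_sum_single, countResidue_eq_iff z hrow]

lemma rkDickePow_le_of_hasRankDecomposition {r : ℕ}
    (h : HasRankDecomposition (DickePow d j N n) r) : rkDickePow d j N n ≤ r :=
  Nat.sInf_le h

lemma rkDickePow_le [NeZero N] (z : Fin d) (hN : N = ∑ i, j i) (n : ℕ) :
    rkDickePow d j N n ≤ (∏ k ∈ univ.erase z, (j k + 1)) ^ n * (n * j z + 1) := by
  have hdec := hasRankDecomposition_apply_sum
    (fun a : CountResidues (Fin n) j z => if a = countResidue j z (fun _ => j) then (1 : ℂ) else 0)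
    (fun (_ : Fin N) (x : Fin n → Fin d) => countResidue j z fun t => Pi.single (x t) 1)
  simp only [← DickePow_eq_ite_countResidue z hN, card_countResidues, Fintype.card_fin] at hdec
  exact rkDickePow_le_of_hasRankDecomposition hdec

end Dicke

section GrowthRate

variable {b : ℝ}

lemma logb_natCast_nonneg (hb : 1 < b) (m : ℕ) : 0 ≤ Real.logb b m :=
  div_nonneg (Real.log_natCast_nonneg m) (Real.log_pos hb).le

lemma logb_natCast_le_logb_natCast (hb : 1 < b) {m n : ℕ} (h : m ≤ n) :
    Real.logb b m ≤ Real.logb b n := by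
  obtain rfl | hm := m.eq_zero_or_pos
  · simpa using logb_natCast_nonneg hb n
  · exact Real.logb_le_logb_of_le hb (by exact_mod_cast hm) (by exact_mod_cast h)

lemma tendsto_logb_mul_add_one_div (b : ℝ) (m : ℕ) :
    Tendsto (fun n : ℕ => Real.logb b ((n * m + 1 : ℕ) : ℝ) / n) atTop (𝓝 0) := by
  obtain rfl | hm := eq_or_ne m 0
  · simp
  have hm' : (m : ℝ) ≠ 0 := Nat.cast_ne_zero.2 hm
  have htop : Tendsto (fun n : ℕ => ((n * m + 1 : ℕ) : ℝ)) atTop atTop :=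
    tendsto_natCast_atTop_atTop.comp <|
      tendsto_atTop_mono (fun n => (Nat.le_mul_of_pos_right n (Nat.pos_of_ne_zero hm)).trans
        (Nat.le_succ _)) tendsto_id
  have hlim := ((Real.tendsto_pow_log_div_mul_add_atTop (m : ℝ)⁻¹ (-(m : ℝ)⁻¹) 1
    (inv_ne_zero hm')).comp htop).div_const (Real.log b)
  rw [zero_div] at hlim
  refine hlim.congr fun n => ?_
  have harg : (m : ℝ)⁻¹ * ((n * m + 1 : ℕ) : ℝ) + -(m : ℝ)⁻¹ = n := by
    push_cast
    field_simp
    ring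
  simp only [Function.comp_apply, harg, pow_one, Real.logb, div_right_comm]

lemma limsup_logb_div_le_of_le_pow_mul (hb : 1 < b) {r q : ℕ → ℕ} {R : ℕ} (hR : R ≠ 0)
    (hq : ∀ n, q n ≠ 0) (hrq : ∀ n, r n ≤ R ^ n * q n)
    (hlim : Tendsto (fun n : ℕ => Real.logb b (q n) / n) atTop (𝓝 0)) :
    limsup (fun n : ℕ => Real.logb b (r n) / n) atTop ≤ Real.logb b R := by
  have hbound : ∀ᶠ n : ℕ in atTop,
      Real.logb b (r n) / n ≤ Real.logb b R + Real.logb b (q n) / n := by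
    filter_upwards [eventually_ne_atTop 0] with n hn
    calc Real.logb b (r n) / n ≤ Real.logb b ((R ^ n * q n : ℕ) : ℝ) / n := by
          gcongr ?_ / _
          exact logb_natCast_le_logb_natCast hb (hrq n)
      _ = (n * Real.logb b R + Real.logb b (q n)) / n := by
          push_cast
          rw [Real.logb_mul (by positivity) (Nat.cast_ne_zero.2 (hq n)), Real.logb_pow]
      _ = Real.logb b R + Real.logb b (q n) / n := by field_simp
  have hlim' : Tendsto (fun n : ℕ => Real.logb b R + Real.logb b (q n) / n) atTop
      (𝓝 (Real.logb b R)) := by simpa using hlim.const_add (Real.logb b R)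
  rw [← hlim'.limsup_eq]
  exact limsup_le_limsup hbound
    (isCoboundedUnder_le_of_le atTop fun n => div_nonneg (logb_natCast_nonneg hb _) n.cast_nonneg)
    hlim'.isBoundedUnder_le

end GrowthRate

theorem limsup_log_rank_DickePow_le_general (d : ℕ) (j : Fin d → ℕ) (z : Fin d) (N : ℕ) [NeZero N]
    (hN : N = ∑ i, j i) :
    limsup (fun n : ℕ => Real.logb 2 (rkDickePow d j N n) / n) atTop
      ≤ ∑ k ∈ univ.erase z, Real.logb 2 (j k + 1) := by
  have hprod : ∏ k ∈ univ.erase z, (j k + 1) ≠ 0 := prod_ne_zero_iff.2 fun k _ => (j k).succ_ne_zero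
  calc limsup (fun n : ℕ => Real.logb 2 (rkDickePow d j N n) / n) atTop
      ≤ Real.logb 2 (∏ k ∈ univ.erase z, (j k + 1) : ℕ) :=
        limsup_logb_div_le_of_le_pow_mul one_lt_two hprod (fun n => (n * j z).succ_ne_zero)
          (rkDickePow_le z hN) (tendsto_logb_mul_add_one_div 2 (j z))
    _ = ∑ k ∈ univ.erase z, Real.logb 2 (j k + 1) := by
        push_cast
        exact Real.logb_prod _ _ fun k _ => by positivity

/-- limsup_{n→∞} (log₂ rk(D(j_1,…,j_d)^{⊗n})) / n ≤ Σ_{k=2}^d log₂(j_k + 1).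
(Equivalently, R(GHZ_N, D(j_1,…,j_d)) ≥ (Σ_{k=2}^d log₂(j_k+1))^{−1}.) -/
theorem limsup_log_rank_DickePow_le (d : ℕ) (hd : 2 ≤ d) (j : Fin d → ℕ)
    (hmono : Antitone j) (hpos : ∀ i, 1 ≤ j i) (N : ℕ) (hN : N = ∑ i, j i) :
    Filter.limsup (fun n : ℕ => Real.logb 2 (rkDickePow d j N n) / n) Filter.atTop
      ≤ ∑ k ∈ Finset.univ.erase (⟨0, by omega⟩ : Fin d), Real.logb 2 (j k + 1) := by
  have : NeZero N := .of_pos (hN ▸ sum_pos (fun i _ => hpos i) ⟨⟨0, by omega⟩, mem_univ _⟩)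
  exact limsup_log_rank_DickePow_le_general d j ⟨0, by omega⟩ N hN
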